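/- arXiv:1907.00679 — 7 statements merged into one kernel-verified Lean document; each statement's English description precedes it below -/
import Mathlib

section
/- Let K be a compact Hausdorff space. If K contains a subset that is not a Borel set, then the Borel σ-algebra generated by the weak-star topology on C*(K) is different from the Borel σ-algebra generated by the weak topology on C*(K), i.e. Bo(C*(K), w*) ≠ Bo(C*(K), w). -/
open NormedSpace MeasureTheory

/-- The weak-star topology on the dual of a normed space `E`: the topology of
pointwise convergence on `E`. -/
noncomputable def weakStarTopology (E : Type*) [NormedAddCommGroup E] [NormedSpace ℝ E] :
    TopologicalSpace (StrongDual ℝ E) :=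
  TopologicalSpace.induced (fun μ : StrongDual ℝ E => (μ : E → ℝ)) Pi.topologicalSpace

/-- The weak topology on a normed space `E`: the topology induced by its topological dual. -/
noncomputable def weakTopology (E : Type*) [NormedAddCommGroup E] [NormedSpace ℝ E] :
    TopologicalSpace E :=
  TopologicalSpace.induced (fun x : E => fun Λ : StrongDual ℝ E => Λ x) Pi.topologicalSpace

/-!
An arbitrary bounded function `g` on `K` coincides, on each finite subset, with a continuous
function of no larger norm. By weak-star compactness of balls in `C**(K)` there is therefore a
single `Λ ∈ C**(K)` with `Λ δ_x = g x` for all `x`. Taking `g` to be the indicator of `s`, every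
subset `s` of `K` is the preimage of a weakly open set under `x ↦ δ_x`; but this map is weak-star
continuous, so only Borel subsets of `K` are preimages of weak-star Borel sets.
-/

open Set
open scoped Topology

theorem exists_continuousMap_forall_mem_eqOn_of_isClosed {X : Type*} [TopologicalSpace X]
    [NormalSpace X] {s : Set X} (hs : IsClosed s) {t : Set ℝ} [t.OrdConnected] (ht : t.Nonempty)
    {g : X → ℝ} (hg : ContinuousOn g s) (hgt : MapsTo g s t) :
    ∃ f : C(X, ℝ), (∀ x, f x ∈ t) ∧ EqOn f g s := by
  obtain ⟨f, hft, hfg⟩ := ContinuousMap.exists_restrict_eq_forall_mem_of_closed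
    ⟨s.domRestrict g, hg.domRestrict⟩ (fun x ↦ hgt x.2) ht hs
  exact ⟨f, hft, fun x hx ↦ DFunLike.congr_fun hfg ⟨x, hx⟩⟩

theorem exists_bidual_forall_apply_eq {𝕜 E ι : Type*} [NontriviallyNormedField 𝕜] [ProperSpace 𝕜]
    [SeminormedAddCommGroup E] [NormedSpace 𝕜 E] {φ : ι → StrongDual 𝕜 E} {c : ι → 𝕜} {r : ℝ}
    (h : ∀ F : Finset ι, ∃ e : E, ‖e‖ ≤ r ∧ ∀ i ∈ F, φ i e = c i) :
    ∃ Λ : StrongDual 𝕜 (StrongDual 𝕜 E), ‖Λ‖ ≤ r ∧ ∀ i, Λ (φ i) = c i := by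
  have closed_eq (i : ι) : IsClosed {Λ : WeakDual 𝕜 (StrongDual 𝕜 E) | Λ (φ i) = c i} :=
    isClosed_eq (WeakDual.eval_continuous (φ i)) continuous_const
  obtain ⟨Λ, hΛr, hΛ⟩ := (WeakDual.isCompact_closedBall 0 r).inter_iInter_nonempty _ closed_eq
    fun F ↦ by
      obtain ⟨e, her, he⟩ := h F
      refine ⟨(inclusionInDoubleDual 𝕜 E e).toWeakDual, ?_, mem_iInter₂.2 he⟩
      exact mem_closedBall_zero_iff.2 ((double_dual_bound 𝕜 E e).trans her)
  exact ⟨Λ.toStrongDual, mem_closedBall_zero_iff.1 hΛr, mem_iInter.1 hΛ⟩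

theorem exists_bidual_forall_apply_evalCLM_eq {K : Type*} [TopologicalSpace K] [CompactSpace K]
    [T2Space K] {g : K → ℝ} (hg : Bornology.IsBounded (range g)) :
    ∃ Λ : StrongDual ℝ (StrongDual ℝ C(K, ℝ)), ∀ x, Λ (ContinuousMap.evalCLM ℝ x) = g x := by
  obtain ⟨r, hr, hgr⟩ := hg.exists_pos_norm_le
  have interpolate (F : Finset K) :
      ∃ f : C(K, ℝ), ‖f‖ ≤ r ∧ ∀ x ∈ F, ContinuousMap.evalCLM ℝ x f = g x := by
    obtain ⟨f, hfr, hfg⟩ := exists_continuousMap_forall_mem_eqOn_of_isClosed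
      F.finite_toSet.isClosed (nonempty_Icc.2 (neg_le_self hr.le)) (F.finite_toSet.continuousOn g)
      fun x _ ↦ abs_le.1 (hgr (g x) (mem_range_self x))
    exact ⟨f, (ContinuousMap.norm_le f hr.le).2 fun x ↦ abs_le.2 (hfr x), hfg⟩
  obtain ⟨Λ, -, hΛ⟩ := exists_bidual_forall_apply_eq interpolate
  exact ⟨Λ, hΛ⟩

theorem isOpen_weakTopology_preimage {E : Type*} [NormedAddCommGroup E] [NormedSpace ℝ E]
    (Λ : StrongDual ℝ E) {V : Set ℝ} (hV : IsOpen V) : IsOpen[weakTopology E] (Λ ⁻¹' V) :=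
  isOpen_induced (hV.preimage (continuous_apply Λ))

theorem continuous_weakStarTopology_evalCLM {K : Type*} [TopologicalSpace K] [CompactSpace K] :
    Continuous[inferInstance, weakStarTopology C(K, ℝ)]
      (ContinuousMap.evalCLM ℝ : K → StrongDual ℝ C(K, ℝ)) :=
  continuous_induced_rng.2 (continuous_pi fun f ↦ f.continuous)

theorem exists_isOpen_weakTopology_preimage_evalCLM_eq {K : Type*} [TopologicalSpace K]
    [CompactSpace K] [T2Space K] (s : Set K) :
    ∃ U : Set (StrongDual ℝ C(K, ℝ)), IsOpen[weakTopology (StrongDual ℝ C(K, ℝ))] U ∧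
      ContinuousMap.evalCLM ℝ ⁻¹' U = s := by
  have bounded_indicator : Bornology.IsBounded (range (s.indicator (1 : K → ℝ))) :=
    ((finite_singleton (0 : ℝ)).insert 1).isBounded.subset <| by
      rintro _ ⟨x, rfl⟩
      exact (s.indicator_eq_zero_or_self 1 x).symm
  obtain ⟨Λ, hΛ⟩ := exists_bidual_forall_apply_evalCLM_eq bounded_indicator
  refine ⟨Λ ⁻¹' {0}ᶜ, isOpen_weakTopology_preimage (E := StrongDual ℝ C(K, ℝ)) Λ
    isOpen_compl_singleton, ?_⟩
  ext x
  simp [hΛ]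

/-- If a compact Hausdorff space `K` contains a non-Borel subset, then
the weak-star Borel σ-algebra of `C*(K)` differs from the weak Borel σ-algebra. -/
theorem weakStar_borel_ne_weak_borel_of_exists_nonBorel
    (K : Type*) [TopologicalSpace K] [CompactSpace K] [T2Space K]
    (h : ∃ s : Set K, ¬ MeasurableSet[borel K] s) :
    @borel (StrongDual ℝ C(K, ℝ)) (weakStarTopology C(K, ℝ)) ≠
      @borel (StrongDual ℝ C(K, ℝ)) (weakTopology (StrongDual ℝ C(K, ℝ))) := by
  intro heq
  obtain ⟨s, hs⟩ := h
  obtain ⟨U, hU, rfl⟩ := exists_isOpen_weakTopology_preimage_evalCLM_eq s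
  have weakStar_borel_U : MeasurableSet[@borel _ (weakStarTopology C(K, ℝ))] U :=
    heq ▸ MeasurableSpace.measurableSet_generateFrom hU
  let _ := weakStarTopology C(K, ℝ)
  exact hs (continuous_weakStarTopology_evalCLM.borel_measurable weakStar_borel_U)
end

section
/- Assume the continuum hypothesis. Let (X, τ) be a Hausdorff topological space with a countable network. If every subset of X is a Borel set, then X is finite or countable. -/
open MeasureTheory Cardinal

/-- A family `N` of subsets of a topological space is a *network* if every neighbourhood
of every point contains a member of `N` containing that point. -/
def IsNetwork {X : Type*} [TopologicalSpace X] (N : Set (Set X)) : Prop :=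
  ∀ x : X, ∀ U : Set X, IsOpen U → x ∈ U → ∃ n ∈ N, x ∈ n ∧ n ⊆ U

/-!
An open set is the union of the members of a network `N` it contains, so there are at most
`2 ^ #N` open sets, and hence at most `𝔠` Borel sets when `N` is countable. If every subset of `X`
is Borel, then `2 ^ #X ≤ 𝔠`, which for uncountable `X` contradicts `𝔠 < 2 ^ ℵ₁`,
a consequence of CH by Cantor's theorem.
-/

namespace IsNetwork

variable {X : Type*} [TopologicalSpace X] {N : Set (Set X)}

theorem sUnion_subset_eq (hN : IsNetwork N) {U : Set X} (hU : IsOpen U) :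
    ⋃₀ {n ∈ N | n ⊆ U} = U := by
  refine Set.Subset.antisymm (Set.sUnion_subset fun n hn => hn.2) fun x hx => ?_
  obtain ⟨n, hn, hxn, hnU⟩ := hN x U hU hx
  exact ⟨n, ⟨hn, hnU⟩, hxn⟩

theorem mk_isOpen_le (hN : IsNetwork N) : #{U : Set X | IsOpen U} ≤ 2 ^ #N := by
  have h_subset : {U : Set X | IsOpen U} ⊆ Set.sUnion '' 𝒫 N := fun U hU =>
    ⟨{n ∈ N | n ⊆ U}, Set.sep_subset _ _, hN.sUnion_subset_eq hU⟩
  calc #{U : Set X | IsOpen U} ≤ #(Set.sUnion '' 𝒫 N) := mk_le_mk_of_subset h_subset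
    _ ≤ #(𝒫 N) := mk_image_le
    _ = 2 ^ #N := mk_powerset N

theorem mk_measurableSet_borel_le (hN : IsNetwork N) :
    #{s : Set X | MeasurableSet[borel X] s} ≤ 2 ^ max #N ℵ₀ := by
  have h_open : max #{U : Set X | IsOpen U} 2 ≤ 2 ^ max #N ℵ₀ :=
    max_le (hN.mk_isOpen_le.trans (power_le_power_left two_ne_zero (le_max_left _ _)))
      ((natCast_le_aleph0 (n := 2)).trans ((le_max_right _ _).trans (cantor _).le))
  calc #{s : Set X | MeasurableSet[borel X] s}
      ≤ max #{U : Set X | IsOpen U} 2 ^ ℵ₀ := MeasurableSpace.cardinal_measurableSet_le _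
    _ ≤ (2 ^ max #N ℵ₀) ^ ℵ₀ := power_le_power_right h_open
    _ = 2 ^ max #N ℵ₀ := by
      rw [← power_mul, mul_aleph0_eq (le_max_right _ _)]

theorem two_power_mk_le_of_forall_measurableSet (hN : IsNetwork N)
    (hB : ∀ s : Set X, MeasurableSet[borel X] s) :
    (2 : Cardinal) ^ #X ≤ 2 ^ max #N ℵ₀ := by
  simpa only [hB, Set.ofPred_true, mk_univ, mk_set] using hN.mk_measurableSet_borel_le

end IsNetwork

universe u v

theorem countable_of_every_subset_borel_of_countable_network_general
    (h𝔠 : Cardinal.continuum.{v} < 2 ^ Cardinal.aleph 1)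
    (X : Type u) [TopologicalSpace X]
    (N : Set (Set X)) (hN : N.Countable) (hnet : IsNetwork N)
    (hB : ∀ s : Set X, MeasurableSet[borel X] s) :
    Countable X := by
  have h_subsets : 2 ^ #X ≤ 𝔠 := by
    simpa only [max_eq_right hN.le_aleph0, two_power_aleph0] using
      hnet.two_power_mk_le_of_forall_measurableSet hB
  have h𝔠_lift : 𝔠 < (2 ^ ℵ₁ : Cardinal.{u}) := by
    simpa [← lift_lt.{u, v}] using lift_lt.{v, u}.2 h𝔠
  by_contra hX
  have h_aleph : ℵ₁ ≤ #X := by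
    rwa [← not_lt, lt_aleph_one_iff, mk_le_aleph0_iff]
  exact h𝔠_lift.not_ge ((power_le_power_left two_ne_zero h_aleph).trans h_subsets)

/-- Assume the continuum hypothesis. If a Hausdorff space `X` has a
countable network and every subset of `X` is Borel, then `X` is finite or countable. -/
theorem countable_of_every_subset_borel_of_countable_network
    (CH : Cardinal.continuum = Cardinal.aleph 1)
    (X : Type*) [TopologicalSpace X] [T2Space X]
    (N : Set (Set X)) (hN : N.Countable) (hnet : IsNetwork N)
    (hB : ∀ s : Set X, MeasurableSet[borel X] s) :
    Finite X ∨ Countable X :=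
  .inr <| countable_of_every_subset_borel_of_countable_network_general
    (CH.trans_lt (cantor _)) X N hN hnet hB
end

section
/- Let (K, τ) be a compact Hausdorff space. If every subset of K is a Borel set, then K is scattered, i.e. every nonempty closed subset S of K contains a point that is isolated in the subspace topology of S. -/
open MeasureTheory

/-!
A Hausdorff space with no isolated point in which some point has a compact neighbourhood carries a
Cantor scheme of closed sets; the pairs (point, branch through it) form a compact set `R` that
injects into the space and maps onto `ℕ → Bool`. Shrink `R` to a closed `E` on which this surjection
`φ` is irreducible. If every subset of the space is Borel then so is every subset of `E`, in
particular `φ ⁻¹' A` for an arbitrary `A ⊆ (ℕ → Bool)`. Irreducible maps push the property of Baire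
forward from `φ ⁻¹' A` to `A`, whereas a free ultrafilter on `ℕ` is a subset of `ℕ → Bool` without
that property.
-/

open Set Filter Topology

universe u v

section Irreducible

variable {X : Type*} {Y : Type*} [TopologicalSpace X] [TopologicalSpace Y]

/-- Irreducible maps: continuous closed surjections that map no proper closed subset onto the
codomain. -/
structure IsIrreducibleMap (f : X → Y) : Prop where
  continuous : Continuous f
  isClosedMap : IsClosedMap f
  surjective : Function.Surjective f
  image_ne_univ : ∀ F : Set X, F ≠ univ → IsClosed F → f '' F ≠ univ

theorem exists_isIrreducibleMap_domRestrict {X : Type max u v} {Y : Type v} [TopologicalSpace X]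
    [TopologicalSpace Y] [CompactSpace X] [T2Space Y] {f : X → Y} (hf : Continuous f)
    (hsurj : Function.Surjective f) : ∃ E : Set X, IsIrreducibleMap (E.domRestrict f) := by
  obtain ⟨E, _, hE, hmin⟩ := exists_compact_surjective_zorn_subset
    (continuous_uliftUp.{v, u}.comp hf) (ULift.up_surjective.comp hsurj)
  have hcont : Continuous (E.domRestrict f) := hf.comp continuous_subtype_val
  refine ⟨E, hcont, hcont.isClosedMap, fun y ↦ ?_, fun F hF hFc himage ↦ hmin F hF hFc ?_⟩
  · obtain ⟨x, hx, hxy⟩ : ULift.up y ∈ (ULift.up ∘ f) '' E := hE ▸ mem_univ _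
    exact ⟨⟨x, hx⟩, ULift.up_injective hxy⟩
  · change (ULift.up ∘ E.domRestrict f) '' F = univ
    rw [image_comp, himage, image_univ_of_surjective ULift.up_surjective]

namespace IsIrreducibleMap

variable {f : X → Y}

theorem isOpen_kernImage (hf : IsIrreducibleMap f) {U : Set X} (hU : IsOpen U) :
    IsOpen (kernImage f U) :=
  isClosedMap_iff_kernImage.mp hf.isClosedMap hU

theorem nonempty_kernImage (hf : IsIrreducibleMap f) {U : Set X} (hU : IsOpen U)
    (hne : U.Nonempty) : (kernImage f U).Nonempty := by
  rw [kernImage_eq_compl, nonempty_compl]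
  exact hf.image_ne_univ Uᶜ (by simpa using hne.ne_empty) hU.isClosed_compl

theorem inter_kernImage_nonempty (hf : IsIrreducibleMap f) {U : Set X} {O : Set Y}
    (hU : IsOpen U) (hO : IsOpen O) (hne : (f ⁻¹' O ∩ U).Nonempty) :
    (O ∩ kernImage f U).Nonempty := by
  obtain ⟨y, hy⟩ := hf.nonempty_kernImage ((hO.preimage hf.continuous).inter hU) hne
  obtain ⟨x, rfl⟩ := hf.surjective y
  exact ⟨f x, (hy rfl).1, fun z hz ↦ (hy hz).2⟩

theorem dense_kernImage_union (hf : IsIrreducibleMap f) {U V : Set X} (hU : IsOpen U)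
    (hV : IsOpen V) (hd : Dense (U ∪ V)) : Dense (kernImage f U ∪ kernImage f V) := by
  refine dense_iff_inter_open.mpr fun O hO hOne ↦ ?_
  have hmeet := hd.inter_open_nonempty _ (hO.preimage hf.continuous) (hOne.preimage hf.surjective)
  rw [inter_union_distrib_left, union_nonempty] at hmeet ⊢
  exact hmeet.imp (hf.inter_kernImage_nonempty hU hO) (hf.inter_kernImage_nonempty hV hO)

theorem comap_residual_le (hf : IsIrreducibleMap f) : comap f (residual Y) ≤ residual X := by
  refine le_countableGenerate_iff_of_countableInterFilter.mpr fun U ⟨hU, hd⟩ ↦ ?_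
  refine mem_comap''.mpr (residual_of_dense_open (hf.isOpen_kernImage hU) ?_)
  simpa only [union_self] using hf.dense_kernImage_union hU hU (by rwa [union_self])

theorem baireMeasurableSet_of_preimage (hf : IsIrreducibleMap f) {A : Set Y}
    (hA : BaireMeasurableSet (f ⁻¹' A)) : BaireMeasurableSet A := by
  obtain ⟨U, hU, hAU⟩ := hA.residualEq_isOpen
  have hV : IsOpen (closure U)ᶜ := isClosed_closure.isOpen_compl
  have hd : Dense (U ∪ (closure U)ᶜ) := by
    simpa only [coborder_eq_union_closure_compl] using dense_coborder (s := U)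
  have hfibres := mem_comap''.mp (hf.comap_residual_le (eventuallyEq_set.mp hAU))
  -- The fibre over a generic point lies entirely inside `U` or entirely off `closure U`.
  have hdecided := residual_of_dense_open ((hf.isOpen_kernImage hU).union (hf.isOpen_kernImage hV))
    (hf.dense_kernImage_union hU hV hd)
  refine (hf.isOpen_kernImage hU).baireMeasurableSet.congr (eventuallyEq_set.mpr ?_)
  filter_upwards [hfibres, hdecided] with y hy hyUV
  obtain ⟨x, rfl⟩ := hf.surjective y
  have hxA : f x ∈ A ↔ x ∈ U := hy rfl
  refine ⟨fun hyU ↦ hxA.mpr (hyU rfl), fun hyA ↦ hyUV.resolve_right fun hyV ↦ ?_⟩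
  exact hyV rfl (subset_closure (hxA.mp hyA))

end IsIrreducibleMap

end Irreducible

section FlipOff

variable {ι : Type*}

open Classical in
/-- The self-homeomorphism of `ι → Bool` negating all coordinates outside the finite set `s`. A free
ultrafilter, regarded as a subset of `ι → Bool`, is mapped onto its complement by it. -/
noncomputable def flipOff (s : Finset ι) : (ι → Bool) ≃ₜ (ι → Bool) :=
  .piCongrRight fun i ↦ if i ∈ s then .refl Bool else Equiv.boolNot.toHomeomorphOfDiscrete

theorem flipOff_apply_of_mem {s : Finset ι} {i : ι} (hi : i ∈ s) (y : ι → Bool) :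
    flipOff s y i = y i := by
  simp [flipOff, hi]

theorem flipOff_apply_of_notMem {s : Finset ι} {i : ι} (hi : i ∉ s) (y : ι → Bool) :
    flipOff s y i = !y i := by
  simp [flipOff, hi, Equiv.toHomeomorphOfDiscrete]

theorem setOf_flipOff_mem_iff {𝓤 : Ultrafilter ι} (h𝓤 : (𝓤 : Filter ι) ≤ cofinite)
    (s : Finset ι) (y : ι → Bool) : {i | flipOff s y i} ∈ 𝓤 ↔ {i | y i} ∉ 𝓤 := by
  rw [← Ultrafilter.compl_mem_iff_notMem]
  refine Filter.congr_sets (h𝓤 ?_)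
  filter_upwards [s.finite_toSet.compl_mem_cofinite] with i hi
  simp [flipOff_apply_of_notMem hi]

theorem exists_isOpen_forall_mem_iff_flipOff_mem {U : Set (ι → Bool)} (hU : IsOpen U) :
    ∃ (s : Finset ι) (V : Set (ι → Bool)), IsOpen V ∧ V.Nonempty ∧
      ∀ y ∈ V, y ∈ U ↔ flipOff s y ∈ U := by
  obtain rfl | ⟨y₀, hy₀⟩ := U.eq_empty_or_nonempty
  · exact ⟨∅, univ, isOpen_univ, univ_nonempty, by simp⟩
  obtain ⟨s, u, hu, hsub⟩ := isOpen_pi_iff.mp hU y₀ hy₀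
  refine ⟨s, (s : Set ι).pi u, isOpen_set_pi s.finite_toSet fun i hi ↦ (hu i hi).1,
    ⟨y₀, fun i hi ↦ (hu i hi).2⟩, fun y hy ↦ iff_of_true (hsub hy) (hsub fun i hi ↦ ?_)⟩
  rw [flipOff_apply_of_mem hi]
  exact hy i hi

theorem not_baireMeasurableSet_setOf_mem_ultrafilter {𝓤 : Ultrafilter ι}
    (h𝓤 : (𝓤 : Filter ι) ≤ cofinite) :
    ¬ BaireMeasurableSet {y : ι → Bool | {i | y i} ∈ 𝓤} := by
  intro hA
  obtain ⟨U, hU, hAU⟩ := hA.residualEq_isOpen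
  obtain ⟨s, V, hV, hVne, hVU⟩ := exists_isOpen_forall_mem_iff_flipOff_mem hU
  have hgen := eventuallyEq_set.mp hAU
  have hgen_flip := (flipOff s).residual_map_eq.le hgen
  obtain ⟨y, hyV, hy, hy_flip⟩ :=
    (dense_of_mem_residual (inter_mem hgen hgen_flip)).inter_open_nonempty V hV hVne
  have h_same : {i | y i} ∈ 𝓤 ↔ {i | flipOff s y i} ∈ 𝓤 := hy.trans ((hVU y hyV).trans hy_flip.symm)
  exact iff_not_self (h_same.trans (setOf_flipOff_mem_iff h𝓤 s y))

end FlipOff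

section Scheme

variable {X β : Type*} {A : List β → Set X}

/-- The graph of the coding relation of a scheme `A`: the pairs of a point and an infinite branch
all of whose sets contain that point. -/
def schemeGraph (A : List β → Set X) : Set (X × (ℕ → β)) :=
  {p | ∀ n, p.1 ∈ A (PiNat.res p.2 n)}

theorem injOn_fst_schemeGraph (hdisj : CantorScheme.Disjoint A) :
    InjOn Prod.fst (schemeGraph A) := by
  rintro ⟨x, y⟩ hy ⟨_, z⟩ hz rfl
  refine Prod.ext rfl (PiNat.res_injective (funext fun n ↦ ?_))
  induction n with
  | zero => rfl
  | succ n ih =>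
    have hyn : x ∈ A (y n :: PiNat.res y n) := hy (n + 1)
    have hzn : x ∈ A (z n :: PiNat.res y n) := ih ▸ hz (n + 1)
    have heq : y n = z n := by
      by_contra hne
      exact disjoint_left.mp (hdisj _ hne) hyn hzn
    exact congrArg₂ List.cons heq ih

variable [TopologicalSpace X]

theorem isClosed_schemeGraph [TopologicalSpace β] [DiscreteTopology β]
    (hcl : ∀ l, IsClosed (A l)) : IsClosed (schemeGraph A) := by
  have hcompl : (schemeGraph A)ᶜ = ⋃ (y : ℕ → β) (n : ℕ),
      (A (PiNat.res y n))ᶜ ×ˢ PiNat.cylinder y n := by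
    ext ⟨x, z⟩
    simp only [schemeGraph, PiNat.cylinder_eq_res, mem_compl_iff, mem_ofPred_eq, not_forall,
      mem_iUnion, mem_prod]
    exact ⟨fun ⟨n, hn⟩ ↦ ⟨z, n, hn, rfl⟩, fun ⟨_, n, hn, hz⟩ ↦ ⟨n, hz ▸ hn⟩⟩
  rw [← isOpen_compl_iff, hcompl]
  exact isOpen_iUnion fun y ↦ isOpen_iUnion fun n ↦
    (hcl _).isOpen_compl.prod (PiNat.isOpen_cylinder _ y n)

theorem isCompact_schemeGraph [TopologicalSpace β] [DiscreteTopology β] [CompactSpace β]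
    (hcl : ∀ l, IsClosed (A l)) (hcomp : IsCompact (A [])) : IsCompact (schemeGraph A) :=
  (hcomp.prod isCompact_univ).of_isClosed_subset (isClosed_schemeGraph hcl)
    fun _ hp ↦ ⟨hp 0, mem_univ _⟩

theorem image_snd_schemeGraph (hanti : CantorScheme.Antitone A)
    (hcl : ∀ l, IsClosed (A l)) (hne : ∀ l, (A l).Nonempty) (hcomp : IsCompact (A [])) :
    Prod.snd '' schemeGraph A = univ := by
  refine eq_univ_of_forall fun y ↦ ?_
  obtain ⟨x, hx⟩ := IsCompact.nonempty_iInter_of_sequence_nonempty_isCompact_isClosed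
    (fun n ↦ A (PiNat.res y n)) (fun n ↦ hanti _ _) (fun n ↦ hne _) hcomp (fun n ↦ hcl _)
  exact ⟨(x, y), mem_iInter.mp hx, rfl⟩

theorem exists_cantorScheme_of_perfect [T25Space X] {C : Set X} (hC : Perfect C)
    (hne : C.Nonempty) :
    ∃ A : List Bool → Set X, A [] = C ∧ CantorScheme.Antitone A ∧ CantorScheme.Disjoint A ∧
      ∀ l, Perfect (A l) ∧ (A l).Nonempty := by
  choose D₀ D₁ h₀ h₁ hdisj using
    fun D : {D : Set X // Perfect D ∧ D.Nonempty} ↦ D.2.1.splitting D.2.2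
  let child (D : {D : Set X // Perfect D ∧ D.Nonempty}) (b : Bool) :
      {D : Set X // Perfect D ∧ D.Nonempty} :=
    b.casesOn ⟨D₀ D, (h₀ D).1, (h₀ D).2.1⟩ ⟨D₁ D, (h₁ D).1, (h₁ D).2.1⟩
  let A (l : List Bool) : {D : Set X // Perfect D ∧ D.Nonempty} :=
    l.foldr (fun b D ↦ child D b) ⟨C, hC, hne⟩
  refine ⟨fun l ↦ A l, rfl, ?_, ?_, fun l ↦ (A l).2⟩
  · rintro l (_ | _)
    exacts [(h₀ (A l)).2.2, (h₁ (A l)).2.2]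
  · rintro l (_ | _) (_ | _) hab
    exacts [absurd rfl hab, hdisj (A l), (hdisj (A l)).symm, absurd rfl hab]

end Scheme

theorem measurableSet_borel_of_injective {X Y : Type*} [TopologicalSpace X] [TopologicalSpace Y]
    {f : X → Y} (hf : Continuous f) (hinj : Function.Injective f)
    (hY : ∀ s : Set Y, MeasurableSet[borel Y] s) (s : Set X) : MeasurableSet[borel X] s :=
  hinj.preimage_image s ▸ hf.borel_measurable (hY (f '' s))

theorem exists_injective_isIrreducibleMap_of_perfect {X : Type u} [TopologicalSpace X] [T25Space X]
    {C : Set X} (hC : Perfect C) (hne : C.Nonempty) (hcomp : IsCompact C) :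
    ∃ (E : Type u) (_ : TopologicalSpace E) (g : E → X) (φ : E → ℕ → Bool),
      Continuous g ∧ Function.Injective g ∧ IsIrreducibleMap φ := by
  obtain ⟨A, rfl, hanti, hdisj, hA⟩ := exists_cantorScheme_of_perfect hC hne
  have hcl (l) : IsClosed (A l) := (hA l).1.closed
  have : CompactSpace (schemeGraph A) :=
    isCompact_iff_compactSpace.mp (isCompact_schemeGraph hcl hcomp)
  have hsurj : Function.Surjective fun p : schemeGraph A ↦ p.1.2 := fun y ↦ by
    obtain ⟨p, hp, hpy⟩ := image_snd_schemeGraph hanti hcl (fun l ↦ (hA l).2) hcomp ▸ mem_univ y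
    exact ⟨⟨p, hp⟩, hpy⟩
  obtain ⟨E, hE⟩ := exists_isIrreducibleMap_domRestrict (by fun_prop) hsurj
  exact ⟨E, inferInstance, fun p ↦ p.1.1.1, _, by fun_prop,
    (injOn_fst_schemeGraph hdisj).injective.comp Subtype.val_injective, hE⟩

theorem exists_not_measurableSet_borel_of_perfect {X : Type*} [TopologicalSpace X] [T25Space X]
    {C : Set X} (hC : Perfect C) (hne : C.Nonempty) (hcomp : IsCompact C) :
    ∃ s : Set X, ¬ MeasurableSet[borel X] s := by
  by_contra! hX
  obtain ⟨E, _, g, φ, hg, hg_inj, hφ⟩ := exists_injective_isIrreducibleMap_of_perfect hC hne hcomp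
  borelize E
  have hbaire (s : Set E) : BaireMeasurableSet s :=
    (measurableSet_borel_of_injective hg hg_inj hX s).baireMeasurableSet
  exact not_baireMeasurableSet_setOf_mem_ultrafilter (hyperfilter_le_cofinite (α := ℕ))
    (hφ.baireMeasurableSet_of_preimage (hbaire _))

theorem exists_perfect_isCompact (X : Type*) [TopologicalSpace X] [R1Space X]
    [WeaklyLocallyCompactSpace X] [PerfectSpace X] [Nonempty X] :
    ∃ C : Set X, Perfect C ∧ C.Nonempty ∧ IsCompact C := by
  obtain ⟨U, hU, hx, hUcomp⟩ := exists_isOpen_mem_isCompact_closure (Classical.arbitrary X)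
  have hUperf : Preperfect U := by
    simpa only [inter_univ] using PerfectSpace.univ_preperfect.open_inter hU
  exact ⟨closure U, hUperf.perfect_closure, ⟨_, subset_closure hx⟩, hUcomp⟩

theorem exists_isOpen_singleton_of_forall_measurableSet_borel {X : Type*} [TopologicalSpace X]
    [T2Space X] [WeaklyLocallyCompactSpace X] [Nonempty X]
    (hX : ∀ s : Set X, MeasurableSet[borel X] s) : ∃ x : X, IsOpen {x} := by
  by_contra! hopen
  have : PerfectSpace X := perfectSpace_iff_forall_not_isolated.mpr fun x ↦
    ⟨mt (isOpen_singleton_iff_punctured_nhds x).mpr (hopen x)⟩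
  obtain ⟨C, hC, hne, hcomp⟩ := exists_perfect_isCompact X
  obtain ⟨s, hs⟩ := exists_not_measurableSet_borel_of_perfect hC hne hcomp
  exact hs (hX s)

theorem scattered_of_every_subset_borel_general {K : Type*} [TopologicalSpace K] [T2Space K]
    (hB : ∀ s : Set K, MeasurableSet[borel K] s) (S : Set K) [WeaklyLocallyCompactSpace S]
    (hne : S.Nonempty) : ∃ x ∈ S, ∃ U : Set K, IsOpen U ∧ U ∩ S = {x} := by
  have := hne.to_subtype
  have hBS : ∀ s : Set S, MeasurableSet[borel S] s :=
    measurableSet_borel_of_injective continuous_subtype_val Subtype.val_injective hB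
  obtain ⟨x, hx⟩ := exists_isOpen_singleton_of_forall_measurableSet_borel hBS
  obtain ⟨U, hU, hUx⟩ := isOpen_induced_iff.mp hx
  refine ⟨x, x.2, U, hU, ?_⟩
  rw [inter_comm, ← Subtype.image_preimage_coe, hUx, image_singleton]

/-- If every subset of a compact Hausdorff space `K` is Borel, then `K`
is scattered: every nonempty closed subset `S` has a point isolated in `S` (i.e. there is
an open set of `K` meeting `S` exactly in that point). -/
theorem scattered_of_every_subset_borel
    (K : Type*) [TopologicalSpace K] [CompactSpace K] [T2Space K]
    (hB : ∀ s : Set K, MeasurableSet[borel K] s) :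
    ∀ S : Set K, S.Nonempty → IsClosed S →
      ∃ x ∈ S, ∃ U : Set K, IsOpen U ∧ U ∩ S = {x} := by
  intro S hne hS
  have : CompactSpace S := isCompact_iff_compactSpace.mp hS.isCompact
  exact scattered_of_every_subset_borel_general hB S hne
end

section
/- Let K be a compact Hausdorff space and let K₀ = {δ_k : k ∈ K} ⊆ C*(K) be the set of evaluation (Dirac) functionals. Then K₀ is closed and discrete in C*(K) equipped with the weak topology; consequently every subset of K₀ belongs to the Borel σ-algebra that the weak topology of C*(K) induces on K₀, i.e. Bo(K₀, w) = P(K₀). -/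
open NormedSpace MeasureTheory Topology

/-!
By Urysohn's lemma some continuous `f : K → [0, 1]` takes the value `1` at `k` and `0` at any given
finite set of other points, so `δ_k` has norm distance at least `1` from the span of the other Dirac
functionals. Hahn–Banach then yields a weakly open half-space containing `δ_k` and no other `δ_j`.
Closedness already holds in the coarser weak-* topology, where `K₀` is a continuous image of `K`.
-/

section WeakTopology

variable {E : Type*} [NormedAddCommGroup E] [NormedSpace ℝ E]

-- `weakTopology E` is definitionally the topology of `WeakSpace ℝ E`, whose lemmas therefore apply.
lemma continuous_weakTopology_apply (Λ : StrongDual ℝ E) : Continuous[weakTopology E, _] Λ :=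
  WeakBilin.eval_continuous (topDualPairing ℝ E).flip Λ

lemma continuous_weakTopology_toWeakDual :
    Continuous[weakTopology (StrongDual ℝ E), _]
      (StrongDual.toWeakDual : StrongDual ℝ E → WeakDual ℝ E) :=
  WeakDual.continuous_of_continuous_eval (α := WeakSpace ℝ (StrongDual ℝ E)) fun x =>
    continuous_weakTopology_apply (inclusionInDoubleDual ℝ E x)

lemma exists_isOpen_weakTopology_inter_eq_singleton_of_notMem_closure_convexHull {s : Set E} {x : E}
    (hx : x ∈ s) (hsep : x ∉ closure (convexHull ℝ (s \ {x}))) :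
    ∃ U, IsOpen[weakTopology E] U ∧ U ∩ s = {x} := by
  obtain ⟨Λ, u, hΛ_lt, hΛ_gt⟩ :=
    geometric_hahn_banach_closed_point (convex_convexHull ℝ _).closure isClosed_closure hsep
  refine ⟨Λ ⁻¹' Set.Ioi u, continuous_def.1 (continuous_weakTopology_apply Λ) _ isOpen_Ioi,
    Set.Subset.antisymm ?_ (Set.singleton_subset_iff.2 ⟨hΛ_gt, hx⟩)⟩
  rintro y ⟨hy_gt : u < Λ y, hys⟩
  by_contra hyx
  exact hy_gt.not_gt (hΛ_lt y (subset_closure (subset_convexHull ℝ _ ⟨hys, hyx⟩)))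

end WeakTopology

section DiracFunctional

variable {K : Type*} [TopologicalSpace K] [CompactSpace K]

/-- The Dirac functional `δ_k : f ↦ f k`, as an element of the normed dual `C*(K)`. -/
noncomputable abbrev diracFunctional (k : K) : StrongDual ℝ C(K, ℝ) :=
  ContinuousMap.evalCLM ℝ k

lemma isClosed_weakTopology_range_diracFunctional :
    IsClosed[weakTopology (StrongDual ℝ C(K, ℝ))] (Set.range (diracFunctional (K := K))) := by
  have hcont : Continuous fun k : K => StrongDual.toWeakDual (diracFunctional k) :=
    WeakDual.continuous_of_continuous_eval fun f => f.continuous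
  have hpre : Set.range (diracFunctional (K := K)) = StrongDual.toWeakDual ⁻¹'
      Set.range fun k : K => StrongDual.toWeakDual (diracFunctional k) := by
    ext μ
    simp only [Set.mem_preimage, Set.mem_range, EmbeddingLike.apply_eq_iff_eq]
  rw [hpre]
  exact (isCompact_range hcont).isClosed.preimage (X := WeakSpace ℝ (StrongDual ℝ C(K, ℝ)))
    continuous_weakTopology_toWeakDual

variable [T2Space K]

lemma exists_norm_le_one_eqOn_zero_apply_eq_one {s : Set K} (hs : IsClosed s) {k : K}
    (hk : k ∉ s) : ∃ f : C(K, ℝ), ‖f‖ ≤ 1 ∧ Set.EqOn f 0 s ∧ f k = 1 := by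
  obtain ⟨f, hf_zero, hf_one, hf_mem⟩ := exists_continuous_zero_one_of_isClosed hs
    isClosed_singleton (Set.disjoint_singleton_right.2 hk)
  refine ⟨f, (ContinuousMap.norm_le _ zero_le_one).2 fun x => ?_, hf_zero, hf_one rfl⟩
  rw [Real.norm_of_nonneg (hf_mem x).1]
  exact (hf_mem x).2

lemma one_le_norm_diracFunctional_sub_of_mem_span {k : K} {ν : StrongDual ℝ C(K, ℝ)}
    (hν : ν ∈ Submodule.span ℝ (diracFunctional '' {k}ᶜ)) : 1 ≤ ‖diracFunctional k - ν‖ := by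
  obtain ⟨t, htk, c, rfl⟩ := (Submodule.mem_span_image_iff_exists_fun ℝ).1 hν
  obtain ⟨f, hf_norm, hf_zero, hf_one⟩ :=
    exists_norm_le_one_eqOn_zero_apply_eq_one t.finite_toSet.isClosed fun hkt => htk hkt rfl
  set ν := ∑ j : t, c j • diracFunctional (j : K)
  have hνf : ν f = 0 := by
    rw [sum_apply]
    exact Finset.sum_eq_zero fun j _ => mul_eq_zero_of_right _ (hf_zero j.2)
  calc
    1 = ‖(diracFunctional k - ν) f‖ := by
      rw [sub_apply, hνf, sub_zero, ContinuousMap.evalCLM_apply, hf_one, norm_one]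
    _ ≤ ‖diracFunctional k - ν‖ := ContinuousLinearMap.unit_le_opNorm _ _ hf_norm

lemma diracFunctional_notMem_closure_span (k : K) :
    diracFunctional k ∉
      closure (Submodule.span ℝ (diracFunctional '' {k}ᶜ) : Set (StrongDual ℝ C(K, ℝ))) := by
  intro hk
  obtain ⟨ν, hν, hnorm⟩ :=
    (SeminormedAddCommGroup.mem_closure_iff (E := StrongDual ℝ C(K, ℝ))).1 hk 1 one_pos
  exact hnorm.not_ge (one_le_norm_diracFunctional_sub_of_mem_span hν)

lemma diracFunctional_notMem_closure_convexHull (k : K) :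
    diracFunctional k ∉
      closure (convexHull ℝ (Set.range (diracFunctional (K := K)) \ {diracFunctional k})) := by
  have hsub : Set.range (diracFunctional (K := K)) \ {diracFunctional k} ⊆
      diracFunctional '' {k}ᶜ := by
    rintro _ ⟨⟨j, rfl⟩, hj⟩
    exact ⟨j, fun hjk => hj (congrArg diracFunctional hjk), rfl⟩
  exact fun hk => diracFunctional_notMem_closure_span k <| closure_mono
    (convexHull_min (hsub.trans Submodule.subset_span) (Submodule.convex _)) hk

end DiracFunctional

/-- For a compact Hausdorff space `K`, the set `K₀` of Dirac (evaluation)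
functionals is closed and discrete in `C*(K)` with the weak topology; consequently every
subset of `K₀` belongs to the Borel σ-algebra that the weak topology induces on `K₀`. -/
theorem diracSet_closed_discrete_and_all_subsets_borel
    (K : Type*) [TopologicalSpace K] [CompactSpace K] [T2Space K] :
    let w : TopologicalSpace (StrongDual ℝ C(K, ℝ)) := weakTopology (StrongDual ℝ C(K, ℝ))
    let K₀ : Set (StrongDual ℝ C(K, ℝ)) := Set.range fun k : K => ContinuousMap.evalCLM ℝ k
    IsClosed[w] K₀ ∧
      (∀ μ ∈ K₀, ∃ U : Set (StrongDual ℝ C(K, ℝ)), IsOpen[w] U ∧ U ∩ K₀ = {μ}) ∧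
      ∀ s : Set K₀, MeasurableSet[@borel K₀ (w.induced Subtype.val)] s := by
  intro w K₀
  have hdisc : ∀ μ ∈ K₀, ∃ U : Set (StrongDual ℝ C(K, ℝ)), IsOpen[w] U ∧ U ∩ K₀ = {μ} := by
    rintro _ ⟨k, rfl⟩
    exact exists_isOpen_weakTopology_inter_eq_singleton_of_notMem_closure_convexHull ⟨k, rfl⟩
      (diracFunctional_notMem_closure_convexHull k)
  refine ⟨isClosed_weakTopology_range_diracFunctional, hdisc, fun s => ?_⟩
  have : @DiscreteTopology K₀ (w.induced Subtype.val) :=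
    (@discreteTopology_subtype_iff' _ w K₀).2 hdisc
  rw [@borel_eq_top_of_discrete K₀ (w.induced Subtype.val) this]
  exact MeasurableSpace.measurableSet_top
end

section
/- Let K be a scattered compact Hausdorff space. Then the Borel σ-algebra generated by the weak topology on C*(K) coincides with the Borel σ-algebra generated by the dual norm topology on C*(K), i.e. Bo(C*(K), w) = Bo(C*(K), ‖·‖). -/
open NormedSpace MeasureTheory

/-!
If the norm topology of a Banach space is generated by the weak topology together with the norm
function (the Kadec property), then the two Borel σ-algebras agree: the norm is weakly lower
semicontinuous and `ℝ` is second countable, so adjoining the norm function to the weak topology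
creates no new Borel sets. The space `ℓ¹(K)` has the Kadec property, and `a ↦ ∑ a x • δ_x` embeds it
isometrically into `C(K)*`. For scattered `K` this embedding is onto, that is, the point
evaluations span a dense subspace: for a functional `μ`, the functions `f` for which `f • μ` lies
in their closed span form a closed ideal. At an isolated point `x` of the zero set of this ideal,
take `f` with `f x = 1` vanishing at the other points of that set. Then `f * g` lies in the ideal
whenever `g x = 0`, and since cutting `f • μ` off to small neighbourhoods of `x` leaves only a
multiple of `δ_x` up to a small error, `f` itself lies in the ideal, a contradiction.
-/

open Filter Set Topology TopologicalSpace
open scoped ENNReal lp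

section BorelInf

variable {X : Type*}

theorem borel_inf_of_secondCountable (t s : TopologicalSpace X)
    [hs : @SecondCountableTopology X s] :
    @borel X (t ⊓ s) = @borel X t ⊔ @borel X s := by
  refine le_antisymm (MeasurableSpace.generateFrom_le fun U hU ↦ ?_)
    (sup_le (borel_anti inf_le_left) (borel_anti inf_le_right))
  let W : Set X → Set X := fun B ↦ ⋃₀ {V | IsOpen[t] V ∧ V ∩ B ⊆ U}
  have hUW : U = ⋃ B ∈ @countableBasis X s hs, W B ∩ B := by
    refine Subset.antisymm (fun x hx ↦ ?_) (iUnion₂_subset fun B _ ↦ ?_)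
    · have hUx : U ∈ @nhds X t x ⊓ @nhds X s x := by
        rw [← nhds_inf]
        exact @IsOpen.mem_nhds X (t ⊓ s) x U hU hx
      obtain ⟨V', hV', B', hB', rfl⟩ := mem_inf_iff.1 hUx
      obtain ⟨V, hVV', hV, hxV⟩ := (@mem_nhds_iff X t x V').1 hV'
      obtain ⟨B, hB, hxB, hBB'⟩ := (@isBasis_countableBasis X s hs).mem_nhds_iff.1 hB'
      exact mem_iUnion₂.2 ⟨B, hB, ⟨V, ⟨hV, inter_subset_inter hVV' hBB'⟩, hxV⟩, hxB⟩
    · rintro x ⟨⟨V, ⟨-, hVU⟩, hxV⟩, hxB⟩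
      exact hVU ⟨hxV, hxB⟩
  have hW : ∀ B, MeasurableSet[@borel X t] (W B) := fun B ↦
    .basic _ (@isOpen_sUnion X t _ fun V hV ↦ hV.1)
  rw [hUW]
  refine MeasurableSet.biUnion (@countable_countableBasis X s hs) fun B hB ↦ .inter ?_ ?_
  · exact (le_sup_left : @borel X t ≤ _) _ (hW B)
  · exact (le_sup_right : @borel X s ≤ _) _ (.basic _ (@isOpen_of_mem_countableBasis X s hs B hB))

theorem borel_inf_induced (t : TopologicalSpace X) {Y : Type*} [TopologicalSpace Y]
    [SecondCountableTopology Y] {f : X → Y} (hf : Measurable[@borel X t, borel Y] f) :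
    @borel X (t ⊓ induced f ‹_›) = @borel X t := by
  have := secondCountableTopology_induced X Y f
  rw [borel_inf_of_secondCountable, borel_comap]
  exact sup_eq_left.2 hf.comap_le

end BorelInf

section WeakTopology

variable {E : Type*} [NormedAddCommGroup E] [NormedSpace ℝ E]

theorem continuous_weakTopology (Λ : StrongDual ℝ E) :
    Continuous[weakTopology E, inferInstance] Λ :=
  (@continuous_pi_iff E _ _ (weakTopology E) _ _).1 continuous_induced_dom Λ

theorem le_weakTopology : (inferInstance : TopologicalSpace E) ≤ weakTopology E :=
  continuous_iff_le_induced.1 (continuous_pi fun Λ ↦ Λ.continuous)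

theorem isClosed_weakTopology_setOf_norm_le (r : ℝ) :
    IsClosed[weakTopology E] {x | ‖x‖ ≤ r} := by
  have h_eq : {x : E | ‖x‖ ≤ r} = ⋂ (Λ : StrongDual ℝ E) (_ : ‖Λ‖ ≤ 1), Λ ⁻¹' Iic r := by
    ext x
    simp only [mem_ofPred_eq, mem_iInter, mem_preimage, mem_Iic]
    refine ⟨fun hx Λ hΛ ↦ ?_, fun h ↦ ?_⟩
    · exact (Real.le_norm_self _).trans ((Λ.le_of_opNorm_le hΛ x).trans (by simpa using hx))
    · obtain ⟨Λ, hΛ, hΛx⟩ := exists_dual_vector'' ℝ x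
      simpa [hΛx] using h Λ hΛ
  rw [h_eq]
  let := weakTopology E
  exact isClosed_biInter fun Λ _ ↦ isClosed_Iic.preimage (continuous_weakTopology Λ)

theorem measurable_norm_borel_weakTopology :
    Measurable[@borel E (weakTopology E), borel ℝ] (fun x : E ↦ ‖x‖) := by
  let := weakTopology E
  let : MeasurableSpace E := borel E
  have : BorelSpace E := ⟨rfl⟩
  rw [← BorelSpace.measurable_eq (α := ℝ)]
  exact measurable_of_Iic fun r ↦ (isClosed_weakTopology_setOf_norm_le r).measurableSet

variable (E) in
/-- The Kadec (or Radon–Riesz) property for nets: a weakly convergent net whose norms converge to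
the norm of its limit converges in norm. It is encoded as a comparison of topologies, where `≤`
means "finer than". -/
def HasKadecNorm : Prop :=
  weakTopology E ⊓ induced (fun x : E ↦ ‖x‖) inferInstance ≤ (inferInstance : TopologicalSpace E)

theorem HasKadecNorm.borel_weakTopology_eq (hE : HasKadecNorm E) :
    @borel E (weakTopology E) = borel E :=
  le_antisymm (borel_anti le_weakTopology)
    ((borel_anti hE).trans (borel_inf_induced _ measurable_norm_borel_weakTopology).le)

end WeakTopology

section KadecLp

variable {ι : Type*} {p : ℝ≥0∞} [Fact (1 ≤ p)]

theorem tendsto_lp_of_tendsto_apply_of_tendsto_norm {α : Type*} {l : Filter α} {E : ι → Type*}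
    [∀ i, NormedAddCommGroup (E i)] (hp : p ≠ ∞) {u : α → lp E p} {f : lp E p}
    (h_apply : ∀ i, Tendsto (fun n ↦ u n i) l (𝓝 (f i)))
    (h_norm : Tendsto (fun n ↦ ‖u n‖) l (𝓝 ‖f‖)) : Tendsto u l (𝓝 f) := by
  classical
  have hp0 : 0 < p.toReal := ENNReal.toReal_pos (zero_lt_one.trans_le Fact.out).ne' hp
  let P : Finset ι → lp E p → lp E p := fun s g ↦ ∑ i ∈ s, lp.single p i (g i)
  have hP : ∀ s, Tendsto (fun n ↦ P s (u n)) l (𝓝 (P s f)) := fun s ↦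
    tendsto_finsetSum _ fun i _ ↦
      ((lp.isometry_single (E := E) (p := p) i).continuous.tendsto _).comp (h_apply i)
  have norm_tail : ∀ s g, ‖g - P s g‖ =
      (‖g‖ ^ p.toReal - ∑ i ∈ s, ‖g i‖ ^ p.toReal) ^ p.toReal⁻¹ := fun s g ↦ by
    rw [← lp.norm_compl_sum_single hp0, Real.rpow_rpow_inv (norm_nonneg _) hp0.ne']
  have h_tail : ∀ s, Tendsto (fun n ↦ ‖u n - P s (u n)‖) l (𝓝 ‖f - P s f‖) := fun s ↦ by
    simp only [norm_tail]
    refine ((h_norm.rpow_const (.inr hp0.le)).sub (tendsto_finsetSum _ fun i _ ↦ ?_)).rpow_const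
      (.inr (inv_nonneg.2 hp0.le))
    exact (h_apply i).norm.rpow_const (.inr hp0.le)
  have h_trunc : Tendsto (fun s ↦ ‖f - P s f‖) atTop (𝓝 0) := by
    have h_sum : Tendsto (P · f) atTop (𝓝 f) := lp.hasSum_single hp f
    simpa only [norm_sub_rev f] using tendsto_iff_norm_sub_tendsto_zero.1 h_sum
  refine Metric.tendsto_nhds.2 fun ε hε ↦ ?_
  obtain ⟨s, hs⟩ := (h_trunc.eventually_lt_const (half_pos hε)).exists
  have h_bound : Tendsto (fun n ↦ ‖P s (u n) - P s f‖ + ‖u n - P s (u n)‖ + ‖f - P s f‖) l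
      (𝓝 (0 + ‖f - P s f‖ + ‖f - P s f‖)) :=
    ((tendsto_iff_norm_sub_tendsto_zero.1 (hP s)).add (h_tail s)).add_const _
  filter_upwards [h_bound.eventually_lt_const (u := ε) (by linarith)] with n hn
  calc dist (u n) f = ‖(P s (u n) - P s f) + (u n - P s (u n)) - (f - P s f)‖ := by
        rw [dist_eq_norm]; congr 1; abel
    _ ≤ ‖P s (u n) - P s f‖ + ‖u n - P s (u n)‖ + ‖f - P s f‖ :=
        (norm_sub_le _ _).trans (add_le_add_left (norm_add_le _ _) _)
    _ < ε := hn

theorem hasKadecNorm_of_linearIsometry_lp {E : Type*} [NormedAddCommGroup E] [NormedSpace ℝ E]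
    (hp : p ≠ ∞) (T : E →ₗᵢ[ℝ] lp (fun _ : ι ↦ ℝ) p) : HasKadecNorm E := by
  refine le_of_nhds_le_nhds fun x ↦ ?_
  rw [T.isometry.isEmbedding.nhds_eq_comap, ← tendsto_iff_comap]
  refine tendsto_lp_of_tendsto_apply_of_tendsto_norm hp (fun i ↦ ?_) ?_
  · let Λ : StrongDual ℝ E := (lp.evalCLM ℝ (fun _ : ι ↦ ℝ) p i).comp T.toContinuousLinearMap
    exact (@Continuous.tendsto _ _ (_) _ _ (continuous_weakTopology Λ) x).mono_left
      (nhds_mono inf_le_left)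
  · simp only [T.norm_map]
    exact (@Continuous.tendsto _ _ (_) _ _ continuous_induced_dom x).mono_left
      (nhds_mono inf_le_right)

end KadecLp

section LOneFamily

theorem hasSum_norm_lp_one {ι : Type*} {E : ι → Type*} [∀ i, NormedAddCommGroup (E i)]
    (a : lp E 1) : HasSum (fun i ↦ ‖a i‖) ‖a‖ := by
  simpa using lp.hasSum_norm (p := 1) (by simp) a

variable {ι 𝕜 F : Type*} [NormedField 𝕜] [NormedAddCommGroup F] [NormedSpace 𝕜 F]

variable (𝕜) in
/-- A family isometrically equivalent to the unit vector basis of `ℓ¹(ι, 𝕜)`. -/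
def IsIsometricLOneFamily (v : ι → F) : Prop :=
  ∀ (s : Finset ι) (a : ι → 𝕜), ‖∑ i ∈ s, a i • v i‖ = ∑ i ∈ s, ‖a i‖

namespace IsIsometricLOneFamily

variable {v : ι → F}

variable [CompleteSpace F]

theorem summable_smul (hv : IsIsometricLOneFamily 𝕜 v) (a : ℓ¹(ι, 𝕜)) :
    Summable fun i ↦ a i • v i :=
  .of_norm_bounded (hasSum_norm_lp_one a).summable fun i ↦ by simpa using (hv {i} a).le

theorem norm_tsum_smul (hv : IsIsometricLOneFamily 𝕜 v) (a : ℓ¹(ι, 𝕜)) :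
    ‖∑' i, a i • v i‖ = ‖a‖ :=
  tendsto_nhds_unique (hv.summable_smul a).hasSum.norm <| by
    simpa only [HasSum, hv _ a] using hasSum_norm_lp_one a

/-- The isometric embedding `a ↦ ∑ a i • v i` of `ℓ¹(ι, 𝕜)` given by such a family. -/
noncomputable def toLinearIsometry (hv : IsIsometricLOneFamily 𝕜 v) : ℓ¹(ι, 𝕜) →ₗᵢ[𝕜] F where
  toFun a := ∑' i, a i • v i
  map_add' a b := by
    simp only [lp.coeFn_add, Pi.add_apply, add_smul]
    exact (hv.summable_smul a).tsum_add (hv.summable_smul b)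
  map_smul' c a := by
    simp only [lp.coeFn_smul, Pi.smul_apply, smul_assoc, RingHom.id_apply]
    exact (hv.summable_smul a).tsum_const_smul c
  norm_map' := hv.norm_tsum_smul

theorem toLinearIsometry_single [DecidableEq ι] (hv : IsIsometricLOneFamily 𝕜 v) (i : ι) :
    hv.toLinearIsometry (lp.single 1 i 1) = v i := by
  refine (tsum_eq_single i fun j hj ↦ ?_).trans ?_ <;> simp [*]

theorem surjective_toLinearIsometry [CompleteSpace 𝕜] (hv : IsIsometricLOneFamily 𝕜 v)
    (h_dense : (Submodule.span 𝕜 (range v)).topologicalClosure = ⊤) :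
    Function.Surjective hv.toLinearIsometry := by
  classical
  rw [← LinearIsometry.coe_toLinearMap, ← LinearMap.range_eq_top, ← top_le_iff, ← h_dense]
  refine Submodule.topologicalClosure_minimal _ (Submodule.span_le.2 ?_) ?_
  · rintro _ ⟨i, rfl⟩
    exact ⟨lp.single 1 i 1, hv.toLinearIsometry_single i⟩
  · exact hv.toLinearIsometry.isometry.isClosedEmbedding.isClosed_range

end IsIsometricLOneFamily

theorem IsIsometricLOneFamily.hasKadecNorm {F : Type*} [NormedAddCommGroup F] [NormedSpace ℝ F]
    [CompleteSpace F] {v : ι → F} (hv : IsIsometricLOneFamily ℝ v)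
    (h_dense : (Submodule.span ℝ (range v)).topologicalClosure = ⊤) : HasKadecNorm F :=
  let T := LinearIsometryEquiv.ofSurjective _ (hv.surjective_toLinearIsometry h_dense)
  hasKadecNorm_of_linearIsometry_lp ENNReal.one_ne_top T.symm.toLinearIsometry

end LOneFamily

theorem exists_almost_norming {E : Type*} [NormedAddCommGroup E] [NormedSpace ℝ E]
    (ν : StrongDual ℝ E) (J : Submodule ℝ E) {ε : ℝ} (hε : 0 < ε) :
    ∃ g ∈ J, ‖g‖ ≤ 1 ∧ ∀ k ∈ J, ‖ν k‖ ≤ (‖ν g‖ + ε) * ‖k‖ := by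
  let νJ : StrongDual ℝ J := ν ∘L J.subtypeL
  obtain ⟨⟨g, hgJ⟩, hg_norm, hg⟩ := νJ.exists_lt_apply_of_lt_opNorm (sub_lt_self _ hε)
  exact ⟨g, hgJ, hg_norm.le, fun k hk ↦
    νJ.le_of_opNorm_le (sub_lt_iff_lt_add.1 hg).le ⟨k, hk⟩⟩

section DualMul

variable {𝕜 A : Type*} [NontriviallyNormedField 𝕜] [NormedCommRing A] [NormedAlgebra 𝕜 A]

/-- The action of a commutative normed algebra on its dual, `(g • μ) f = μ (g * f)`. For
`A = C(K, ℝ)` this is the multiplication of a measure by a density. -/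
noncomputable def dualMul : A →L[𝕜] StrongDual 𝕜 A →L[𝕜] StrongDual 𝕜 A :=
  (ContinuousLinearMap.compL 𝕜 A A 𝕜).flip ∘L ContinuousLinearMap.mul 𝕜 A

@[simp]
theorem dualMul_apply (g : A) (μ : StrongDual 𝕜 A) (f : A) : dualMul g μ f = μ (g * f) := rfl

theorem dualMul_one (μ : StrongDual 𝕜 A) : dualMul 1 μ = μ := by
  ext f
  simp only [dualMul_apply, one_mul]

theorem dualMul_mul (f g : A) (μ : StrongDual 𝕜 A) :
    dualMul (f * g) μ = dualMul f (dualMul g μ) := by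
  ext h
  simp only [dualMul_apply, mul_assoc, mul_left_comm g]

/-- The ideal of all `f` with `f • μ ∈ D`, for a submodule `D` of the dual stable under the action
of the algebra. -/
def multiplierIdeal (D : Submodule 𝕜 (StrongDual 𝕜 A)) (hD : ∀ g, ∀ ν ∈ D, dualMul g ν ∈ D)
    (μ : StrongDual 𝕜 A) : Ideal A where
  carrier := {f | dualMul f μ ∈ D}
  add_mem' {f g} hf hg := by
    simpa only [mem_ofPred_eq, map_add, add_apply] using D.add_mem hf hg
  zero_mem' := by simp
  smul_mem' g f hf := by
    simpa only [mem_ofPred_eq, smul_eq_mul, dualMul_mul] using hD g _ hf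

theorem mem_multiplierIdeal {D : Submodule 𝕜 (StrongDual 𝕜 A)}
    {hD : ∀ g, ∀ ν ∈ D, dualMul g ν ∈ D} {μ : StrongDual 𝕜 A} {f : A} :
    f ∈ multiplierIdeal D hD μ ↔ dualMul f μ ∈ D := Iff.rfl

theorem isClosed_multiplierIdeal {D : Submodule 𝕜 (StrongDual 𝕜 A)}
    (hD : ∀ g, ∀ ν ∈ D, dualMul g ν ∈ D) (hD_closed : IsClosed (D : Set (StrongDual 𝕜 A)))
    (μ : StrongDual 𝕜 A) : IsClosed (multiplierIdeal D hD μ : Set A) :=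
  have h_cont : Continuous fun f ↦ dualMul f μ := (dualMul.flip μ).continuous
  hD_closed.preimage h_cont

end DualMul

section ContinuousFunctions

variable {K : Type*} [TopologicalSpace K]

/-- Evaluation at `x` as an element of `C*(K)`: the Dirac measure at `x`. -/
noncomputable def pointEval (x : K) : StrongDual ℝ C(K, ℝ) :=
  ContinuousMap.evalCLM ℝ x

@[simp]
theorem pointEval_apply (x : K) (f : C(K, ℝ)) : pointEval x f = f x := rfl

variable (K) in
/-- The closed linear span of the point evaluations: the space of discrete measures on `K`. -/
noncomputable def pointEvalSpan : Submodule ℝ (StrongDual ℝ C(K, ℝ)) :=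
  (Submodule.span ℝ (range pointEval)).topologicalClosure

theorem isClosed_pointEvalSpan : IsClosed (pointEvalSpan K : Set (StrongDual ℝ C(K, ℝ))) :=
  Submodule.isClosed_topologicalClosure _

theorem pointEval_mem_pointEvalSpan (x : K) : pointEval x ∈ pointEvalSpan K :=
  Submodule.le_topologicalClosure _ (Submodule.subset_span ⟨x, rfl⟩)

theorem exists_bump [NormalSpace K] [T1Space K] {U : Set K} (hU : IsOpen U) {x : K} (hx : x ∈ U) :
    ∃ f : C(K, ℝ), f x = 1 ∧ (∀ y ∉ U, f y = 0) ∧ ∀ y, |f y| ≤ 1 := by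
  obtain ⟨f, hf_zero, hf_one, hf_mem⟩ := exists_continuous_zero_one_of_isClosed
    hU.isClosed_compl isClosed_singleton (disjoint_singleton_right.2 (not_not.2 hx))
  exact ⟨f, hf_one rfl, fun y hy ↦ hf_zero hy,
    fun y ↦ (abs_of_nonneg (hf_mem y).1).trans_le (hf_mem y).2⟩

variable [CompactSpace K]

theorem norm_pointEval_le (x : K) : ‖pointEval x‖ ≤ 1 :=
  ContinuousLinearMap.opNorm_le_bound _ zero_le_one fun f ↦ by
    simpa using f.norm_coe_le_norm x

theorem dualMul_pointEval (g : C(K, ℝ)) (x : K) :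
    dualMul g (pointEval x) = g x • pointEval x := by
  ext f
  simp

theorem dualMul_mem_pointEvalSpan (g : C(K, ℝ)) :
    ∀ ν ∈ pointEvalSpan K, dualMul g ν ∈ pointEvalSpan K := by
  suffices pointEvalSpan K ≤ (pointEvalSpan K).comap (dualMul g).toLinearMap from this
  refine Submodule.topologicalClosure_minimal _ (Submodule.span_le.2 ?_)
    (isClosed_pointEvalSpan.preimage (dualMul g).continuous)
  rintro _ ⟨x, rfl⟩
  change dualMul g (pointEval x) ∈ pointEvalSpan K
  rw [dualMul_pointEval]
  exact Submodule.smul_mem _ _ (pointEval_mem_pointEvalSpan x)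

theorem norm_add_mul_le {g h k : C(K, ℝ)} {δ : ℝ} (hδ : 0 ≤ δ) (hg : ‖g‖ ≤ 1) (hk : ‖k‖ ≤ 1)
    (hh : ∀ y, |h y| ≤ 1) (h_supp : ∀ y, δ ≤ |g y| → h y = 0) : ‖g + h * k‖ ≤ 1 + δ := by
  refine (ContinuousMap.norm_le _ (by positivity)).2 fun y ↦ ?_
  rcases le_or_gt δ |g y| with hy | hy
  · have hgy : |g y| ≤ 1 := (g.norm_coe_le_norm y).trans hg
    simpa [h_supp y hy] using hgy.trans (by linarith)
  · have hhk : |h y * k y| ≤ 1 := by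
      rw [abs_mul]
      exact mul_le_one₀ (hh y) (abs_nonneg _) ((k.norm_coe_le_norm y).trans hk)
    calc |g y + h y * k y| ≤ |g y| + |h y * k y| := abs_add_le _ _
      _ ≤ 1 + δ := by linarith

variable [T2Space K]

theorem exists_norm_le_one_eqOn_finset (s : Finset K) {a : K → ℝ} (ha : ∀ x, |a x| ≤ 1) :
    ∃ g : C(K, ℝ), ‖g‖ ≤ 1 ∧ EqOn g a s := by
  obtain ⟨g, hg_mem, hg_eq⟩ := ContinuousMap.exists_restrict_eq_forall_mem_of_closed
    (⟨fun x : (s : Set K) ↦ a x, continuous_of_discreteTopology⟩ : C((s : Set K), ℝ))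
    (t := Icc (-1) 1) (fun x ↦ abs_le.1 (ha x)) ⟨0, by norm_num⟩ s.finite_toSet.isClosed
  exact ⟨g, (ContinuousMap.norm_le _ zero_le_one).2 fun y ↦ abs_le.2 (hg_mem y),
    fun x hx ↦ DFunLike.congr_fun hg_eq ⟨x, hx⟩⟩

theorem isIsometricLOneFamily_pointEval :
    IsIsometricLOneFamily ℝ (pointEval : K → StrongDual ℝ C(K, ℝ)) := by
  intro s a
  refine le_antisymm (norm_sum_le_of_le s fun x _ ↦ ?_) ?_
  · exact (ContinuousLinearMap.opNorm_smul_le _ _).trans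
      (mul_le_of_le_one_right (norm_nonneg _) (norm_pointEval_le x))
  · have h_sign : ∀ x, |((SignType.sign (a x) : SignType) : ℝ)| ≤ 1 := fun x ↦ by
      rcases lt_trichotomy (a x) 0 with h | h | h <;> simp [h]
    obtain ⟨g, hg, hga⟩ := exists_norm_le_one_eqOn_finset s h_sign
    calc ∑ x ∈ s, ‖a x‖ = ∑ x ∈ s, a x * g x :=
          Finset.sum_congr rfl fun x hx ↦ by rw [hga hx, self_mul_sign, Real.norm_eq_abs]
      _ = (∑ x ∈ s, a x • pointEval x) g := by simp
      _ ≤ ‖∑ x ∈ s, a x • pointEval x‖ :=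
          (Real.le_norm_self _).trans (ContinuousLinearMap.unit_le_opNorm _ g hg)

-- Let `g` almost norm `ν` on the functions vanishing at `x`, and let `h` live where `g` is small.
-- Then `‖g ± h * k‖` barely exceeds `1`, so `ν` cannot gain much from either sign of `h * k`.
theorem exists_abs_apply_mul_le (ν : StrongDual ℝ C(K, ℝ)) (x : K) {ε : ℝ} (hε : 0 < ε) :
    ∃ h : C(K, ℝ), h x = 1 ∧ ∀ k : C(K, ℝ), k x = 0 → ‖k‖ ≤ 1 → |ν (h * k)| ≤ ε := by
  obtain ⟨g, hgx : g x = 0, hg_norm, hg⟩ :=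
    exists_almost_norming ν (pointEval x).ker (half_pos hε)
  set C := |ν g| + ε / 2 with hC_def
  have hC : 0 < C := by positivity
  have hδ : 0 < ε / 2 / C := by positivity
  obtain ⟨h, hhx, h_supp, h_le⟩ := exists_bump (x := x) (U := {y | |g y| < ε / 2 / C})
    (isOpen_lt (by fun_prop) continuous_const) (by simpa only [mem_ofPred_eq, hgx, abs_zero])
  have apply_le : ∀ k : C(K, ℝ), k x = 0 → ‖k‖ ≤ 1 → |ν g + ν (h * k)| ≤ |ν g| + ε := by
    intro k hkx hk
    have h_norm : ‖g + h * k‖ ≤ 1 + ε / 2 / C :=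
      norm_add_mul_le hδ.le hg_norm hk h_le fun y hy ↦ h_supp y (not_lt.2 hy)
    have h_ker : (g + h * k) x = 0 := by simp [hgx, hkx]
    calc |ν g + ν (h * k)| = |ν (g + h * k)| := by rw [map_add]
      _ ≤ C * ‖g + h * k‖ := hg _ h_ker
      _ ≤ C * (1 + ε / 2 / C) := by gcongr
      _ = |ν g| + ε := by rw [mul_add, mul_div_cancel₀ _ hC.ne', hC_def]; ring
  refine ⟨h, hhx, fun k hkx hk ↦ ?_⟩
  have h_add := abs_le.1 (apply_le k hkx hk)
  have h_sub := abs_le.1 (apply_le (-k) (by simp [hkx]) (by rwa [norm_neg]))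
  rw [mul_neg, map_neg] at h_sub
  rcases abs_cases (ν g) with ⟨h_abs, -⟩ | ⟨h_abs, -⟩ <;>
    exact abs_le.2 ⟨by linarith, by linarith⟩

theorem exists_norm_dualMul_sub_le (ν : StrongDual ℝ C(K, ℝ)) (x : K) {ε : ℝ} (hε : 0 < ε) :
    ∃ h : C(K, ℝ), h x = 1 ∧ ‖dualMul h ν - ν h • pointEval x‖ ≤ ε := by
  obtain ⟨h, hhx, hh⟩ := exists_abs_apply_mul_le ν x (half_pos hε)
  refine ⟨h, hhx, ContinuousLinearMap.opNorm_le_of_unit_norm hε.le fun f hf ↦ ?_⟩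
  let k : C(K, ℝ) := (2⁻¹ : ℝ) • (f - f x • 1)
  have hf_le : ∀ y, ‖f y‖ ≤ 1 := fun y ↦ (f.norm_coe_le_norm y).trans hf.le
  have hk_apply : ∀ y, k y = 2⁻¹ * (f y - f x) := fun y ↦ by simp [k]
  have hk : ‖k‖ ≤ 1 := (ContinuousMap.norm_le _ zero_le_one).2 fun y ↦ by
    have h_sub := norm_sub_le_of_le (hf_le y) (hf_le x)
    rw [hk_apply, norm_mul, norm_inv, Real.norm_two]
    linarith
  have h_apply : (dualMul h ν - ν h • pointEval x) f = 2 * ν (h * k) := by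
    simp [k, mul_sub, mul_comm (ν h)]
  calc ‖(dualMul h ν - ν h • pointEval x) f‖ = 2 * |ν (h * k)| := by
        rw [h_apply, norm_mul, Real.norm_two, Real.norm_eq_abs]
    _ ≤ 2 * (ε / 2) := by gcongr; exact hh k (by simp [hk_apply]) hk
    _ = ε := by ring

theorem mem_of_forall_dualMul_mem {D : Submodule ℝ (StrongDual ℝ C(K, ℝ))}
    (hD : IsClosed (D : Set (StrongDual ℝ C(K, ℝ)))) {x : K} (hx : pointEval x ∈ D)
    {ν : StrongDual ℝ C(K, ℝ)} (hν : ∀ g : C(K, ℝ), g x = 0 → dualMul g ν ∈ D) : ν ∈ D := by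
  refine hD.closure_subset <|
    (SeminormedAddCommGroup.mem_closure_iff (E := StrongDual ℝ C(K, ℝ))).2 fun ε hε ↦ ?_
  obtain ⟨h, hhx, hh⟩ := exists_norm_dualMul_sub_le ν x (half_pos hε)
  refine ⟨dualMul (1 - h) ν + ν h • pointEval x,
    D.add_mem (hν _ (by simp [hhx])) (D.smul_mem _ hx), ?_⟩
  have h_sub : ν - (dualMul (1 - h) ν + ν h • pointEval x) = dualMul h ν - ν h • pointEval x := by
    ext f
    simp only [map_sub, dualMul_one, sub_apply, add_apply]
    ring
  rw [h_sub]
  exact hh.trans_lt (half_lt_self hε)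

end ContinuousFunctions

section Scattered

/-- A scattered space: every nonempty closed subset has a point isolated in that subset. -/
def IsScattered (K : Type*) [TopologicalSpace K] : Prop :=
  ∀ S : Set K, S.Nonempty → IsClosed S → ∃ x ∈ S, ∃ U : Set K, IsOpen U ∧ U ∩ S = {x}

variable {K : Type*} [TopologicalSpace K] [CompactSpace K] [T2Space K]

theorem IsScattered.ideal_eq_top (hK : IsScattered K) {I : Ideal C(K, ℝ)}
    (hI : IsClosed (I : Set C(K, ℝ)))
    (h_local : ∀ x, ∀ f : C(K, ℝ), (∀ g : C(K, ℝ), g x = 0 → f * g ∈ I) → f ∈ I) : I = ⊤ := by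
  have hI_eq := ContinuousMap.idealOfSet_ofIdeal_isClosed hI
  suffices (ContinuousMap.setOfIdeal I)ᶜ = ∅ by
    rw [Ideal.eq_top_iff_one, ← hI_eq, ContinuousMap.mem_idealOfSet, this]
    simp
  by_contra h_ne
  obtain ⟨x, hx, U, hU, hUx⟩ := hK _ (nonempty_iff_ne_empty.2 h_ne)
    (ContinuousMap.setOfIdeal_open I).isClosed_compl
  obtain ⟨f, hfx, hf_supp, -⟩ := exists_bump hU (hUx.ge rfl).1
  have hfI : f ∈ I := h_local x f fun g hgx ↦ by
    rw [← hI_eq, ContinuousMap.mem_idealOfSet]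
    intro y hy
    by_cases hyU : y ∈ U
    · obtain rfl : y = x := hUx.le ⟨hyU, hy⟩
      simp [hgx]
    · simp [hf_supp y hyU]
  exact one_ne_zero (hfx.symm.trans (ContinuousMap.notMem_setOfIdeal.1 hx hfI))

theorem IsScattered.pointEvalSpan_eq_top (hK : IsScattered K) : pointEvalSpan K = ⊤ := by
  refine Submodule.eq_top_iff'.2 fun μ ↦ ?_
  have h_top : multiplierIdeal (pointEvalSpan K) dualMul_mem_pointEvalSpan μ = ⊤ :=
    hK.ideal_eq_top (isClosed_multiplierIdeal _ isClosed_pointEvalSpan μ) fun x f hf ↦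
      mem_of_forall_dualMul_mem isClosed_pointEvalSpan (pointEval_mem_pointEvalSpan x)
        fun g hgx ↦ by
          rw [← dualMul_mul, mul_comm]
          exact hf g hgx
  simpa only [mem_multiplierIdeal, dualMul_one] using (Ideal.eq_top_iff_one _).1 h_top

end Scattered

/-- If `K` is a scattered compact Hausdorff space (every nonempty closed
subset has a point isolated in it), then the weak Borel σ-algebra of `C*(K)` coincides
with the norm Borel σ-algebra. -/
theorem weak_borel_eq_norm_borel_of_scattered
    (K : Type*) [TopologicalSpace K] [CompactSpace K] [T2Space K]
    (hscat : ∀ S : Set K, S.Nonempty → IsClosed S →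
      ∃ x ∈ S, ∃ U : Set K, IsOpen U ∧ U ∩ S = {x}) :
    @borel (StrongDual ℝ C(K, ℝ)) (weakTopology (StrongDual ℝ C(K, ℝ))) = borel (StrongDual ℝ C(K, ℝ)) := by
  have h_dense : pointEvalSpan K = ⊤ := IsScattered.pointEvalSpan_eq_top hscat
  exact (isIsometricLOneFamily_pointEval.hasKadecNorm h_dense).borel_weakTopology_eq
end

section
/- Let K be a compact Hausdorff space. If the Borel σ-algebra generated by the weak-star topology on C*(K) coincides with the Borel σ-algebra generated by the dual norm topology on C*(K), then every subset of K is a Borel set. -/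
open NormedSpace MeasureTheory

/- Let `δ x` be the evaluation at `x ∈ K`. The map `δ` is weak-star continuous, whereas
`‖δ x - δ y‖ ≥ 2` for `x ≠ y` by Urysohn's lemma. So for every `s ⊆ K` the union of the open balls
of radius `2` about the `δ x`, `x ∈ s`, is a norm-open set whose preimage under `δ` is exactly `s`.
By hypothesis this union is weak-star Borel, hence `s` is Borel. -/

open scoped Topology

theorem continuous_weakStarTopology_iff {X E : Type*} [TopologicalSpace X]
    [NormedAddCommGroup E] [NormedSpace ℝ E] {φ : X → StrongDual ℝ E} :
    Continuous[_, weakStarTopology E] φ ↔ ∀ e, Continuous fun x => φ x e :=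
  continuous_induced_rng.trans continuous_pi_iff

theorem preimage_thickening_image_of_pairwise_le_dist {X Y : Type*} [PseudoMetricSpace Y]
    {φ : X → Y} {r : ℝ} (hr : 0 < r) (hφ : Pairwise fun x y => r ≤ dist (φ x) (φ y))
    (s : Set X) : φ ⁻¹' Metric.thickening r (φ '' s) = s := by
  refine Set.Subset.antisymm (fun x hx => ?_)
    (Set.image_subset_iff.1 (Metric.self_subset_thickening hr _))
  obtain ⟨_, ⟨y, hy, rfl⟩, hxy⟩ := Metric.mem_thickening_iff.1 hx
  rwa [hφ.eq hxy.not_ge]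

theorem two_le_dist_evalCLM {K : Type*} [TopologicalSpace K] [CompactSpace K] [T2Space K]
    {x y : K} (hxy : x ≠ y) :
    2 ≤ dist (ContinuousMap.evalCLM ℝ x : StrongDual ℝ C(K, ℝ)) (ContinuousMap.evalCLM ℝ y) := by
  obtain ⟨f, hfx, hfy, hf⟩ := exists_bounded_mem_Icc_of_closed_of_le
    (isClosed_singleton (x := x)) (isClosed_singleton (x := y))
    (Set.disjoint_singleton.2 hxy) (show (-1 : ℝ) ≤ 1 by norm_num)
  have norm_f_le : ‖f.toContinuousMap‖ ≤ 1 :=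
    (ContinuousMap.norm_le _ zero_le_one).2 fun z => abs_le.2 (hf z)
  rw [dist_eq_norm (E := StrongDual ℝ C(K, ℝ))]
  calc (2 : ℝ) = ‖f x - f y‖ := by rw [hfx rfl, hfy rfl]; norm_num
    _ ≤ ‖(ContinuousMap.evalCLM ℝ x - ContinuousMap.evalCLM ℝ y : StrongDual ℝ C(K, ℝ))‖ :=
      (ContinuousMap.evalCLM ℝ x - ContinuousMap.evalCLM ℝ y : StrongDual ℝ C(K, ℝ)).unit_le_opNorm
        f.toContinuousMap norm_f_le

theorem every_subset_borel_of_weakStar_borel_eq_norm_borel_general {X E : Type*}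
    [TopologicalSpace X] [NormedAddCommGroup E] [NormedSpace ℝ E] {φ : X → StrongDual ℝ E} {r : ℝ}
    (h : borel (StrongDual ℝ E) ≤ @borel (StrongDual ℝ E) (weakStarTopology E))
    (hφ : Continuous[_, weakStarTopology E] φ) (hr : 0 < r)
    (hsep : Pairwise fun x y => r ≤ dist (φ x) (φ y)) (s : Set X) : MeasurableSet[borel X] s := by
  have measurable_φ : Measurable[borel X, @borel _ (weakStarTopology E)] φ :=
    @Continuous.borel_measurable _ _ _ (weakStarTopology E) _ hφ
  have isOpen_thickening : IsOpen (Metric.thickening r (φ '' s)) := Metric.isOpen_thickening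
  rw [← preimage_thickening_image_of_pairwise_le_dist hr hsep s]
  exact measurable_φ (h _ (MeasurableSpace.measurableSet_generateFrom isOpen_thickening))

/-- For a compact Hausdorff space `K`, if the weak-star Borel σ-algebra
of `C*(K)` coincides with the norm Borel σ-algebra, then every subset of `K` is Borel. -/
theorem every_subset_borel_of_weakStar_borel_eq_norm_borel
    (K : Type*) [TopologicalSpace K] [CompactSpace K] [T2Space K]
    (h : @borel (StrongDual ℝ C(K, ℝ)) (weakStarTopology C(K, ℝ)) = borel (StrongDual ℝ C(K, ℝ))) :
    ∀ s : Set K, MeasurableSet[borel K] s :=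
  every_subset_borel_of_weakStar_borel_eq_norm_borel_general h.ge
    (continuous_weakStarTopology_iff.2 ContinuousMap.continuous) two_pos
    fun _ _ => two_le_dist_evalCLM
end

section
/- Let X be an uncountable subset of ℝ such that every subset of X is an Fσ set in the subspace topology of X, and let α(X) denote the one-point compactification of X. Then: (i) every subset of α(X) is a Borel set; (ii) every relatively discrete subset of α(X) is countable; and hence (iii) α(X) is not a countable union of relatively discrete subsets. -/
open MeasureTheory

/-!
Every subset `s` of `α(X)` is the image of a subset of `X` under the open embedding `X → α(X)`,
together with `s ∩ {∞}`, where `{∞}` is closed. Hence `α(X)` inherits from `X` both the property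
that all subsets are Borel and the property of being hereditarily Lindelöf. A discrete subset of a
hereditarily Lindelöf space is a discrete Lindelöf space, hence countable.
-/

open Set
open scoped OnePoint

theorem onePoint_image_coe_preimage_union_inter_infty {X : Type*} (s : Set (OnePoint X)) :
    ((↑) : X → OnePoint X) '' ((↑) ⁻¹' s) ∪ s ∩ {∞} = s := by
  rw [image_preimage_eq_inter_range, ← OnePoint.compl_range_coe, inter_union_compl]

section Borel

variable {X : Type*} [TopologicalSpace X]

theorem measurableSet_borel_of_eq_iUnion_isClosed {ι : Sort*} [Countable ι] {s : Set X}
    {F : ι → Set X} (hF : ∀ i, IsClosed (F i)) (hs : s = ⋃ i, F i) : MeasurableSet[borel X] s := by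
  borelize X
  exact hs ▸ MeasurableSet.iUnion fun i ↦ (hF i).measurableSet

theorem measurableSet_borel_onePoint (h : ∀ s : Set X, MeasurableSet[borel X] s)
    (s : Set (OnePoint X)) : MeasurableSet[borel (OnePoint X)] s := by
  borelize X (OnePoint X)
  have hcoe : MeasurableSet (((↑) : X → OnePoint X) '' ((↑) ⁻¹' s)) :=
    OnePoint.isOpenEmbedding_coe.measurableEmbedding.measurableSet_image' (h _)
  have hinfty : MeasurableSet (s ∩ {∞}) := by
    obtain hs | hs := subset_singleton_iff_eq.1 (inter_subset_right : s ∩ {∞} ⊆ {∞}) <;>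
      rw [hs]
    · exact MeasurableSet.empty
    · exact OnePoint.isClosed_infty.measurableSet
  rw [← onePoint_image_coe_preimage_union_inter_infty s]
  exact hcoe.union hinfty

end Borel

section HereditarilyLindelof

variable {X : Type*} [TopologicalSpace X] [HereditarilyLindelofSpace X]

instance : HereditarilyLindelofSpace (OnePoint X) :=
  .of_forall_isOpen fun s _ ↦ by
    rw [← onePoint_image_coe_preimage_union_inter_infty s]
    exact ((HereditarilyLindelofSpace.isLindelof _).image OnePoint.continuous_coe).union
      (subsingleton_singleton.anti inter_subset_right).isLindelof

theorem countable_of_isDiscrete {s : Set X} (hs : IsDiscrete s) : s.Countable :=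
  (HereditarilyLindelofSpace.isLindelof s).countable_of_isDiscrete hs

theorem iUnion_ne_univ_of_isDiscrete [Uncountable X] {ι : Sort*} [Countable ι] {D : ι → Set X}
    (hD : ∀ i, IsDiscrete (D i)) : ⋃ i, D i ≠ univ := fun h ↦
  not_countable_univ (h ▸ countable_iUnion fun i ↦ countable_of_isDiscrete (hD i))

end HereditarilyLindelof

theorem onePoint_not_countable_union_of_discrete_general {X : Type*} [TopologicalSpace X]
    [HereditarilyLindelofSpace X] [Uncountable X] (hX : ∀ s : Set X, MeasurableSet[borel X] s) :
    (∀ s : Set (OnePoint X), MeasurableSet[borel (OnePoint X)] s) ∧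
      (∀ D : Set (OnePoint X), IsDiscrete D → D.Countable) ∧
      ¬ ∃ D : ℕ → Set (OnePoint X), (∀ n, IsDiscrete (D n)) ∧ ⋃ n, D n = univ :=
  have : Uncountable (OnePoint X) := OnePoint.coe_injective.uncountable
  ⟨measurableSet_borel_onePoint hX, fun _ ↦ countable_of_isDiscrete,
    fun ⟨_, hD, hU⟩ ↦ iUnion_ne_univ_of_isDiscrete hD hU⟩

/-- Let `X` be an uncountable subset of `ℝ` in which every subset is a
relative `Fσ` set, and let `α(X)` be its one-point compactification. Then (i) every subset
of `α(X)` is Borel; (ii) every relatively discrete subset of `α(X)` is countable; and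
hence (iii) `α(X)` is not a countable union of relatively discrete subsets. -/
theorem onePoint_not_countable_union_of_discrete
    (X : Set ℝ) (hX : ¬ X.Countable)
    (hFσ : ∀ s : Set X, ∃ F : ℕ → Set X, (∀ n, IsClosed (F n)) ∧ s = ⋃ n, F n) :
    (∀ s : Set (OnePoint X), MeasurableSet[borel (OnePoint X)] s) ∧
      (∀ D : Set (OnePoint X),
        (∀ x ∈ D, ∃ U : Set (OnePoint X), IsOpen U ∧ U ∩ D = {x}) → D.Countable) ∧
      ¬ ∃ D : ℕ → Set (OnePoint X),
        (∀ n, ∀ x ∈ D n, ∃ U : Set (OnePoint X), IsOpen U ∧ U ∩ D n = {x}) ∧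
        (⋃ n, D n) = Set.univ := by
  have : Uncountable X := by rwa [← not_countable_iff, countable_coe_iff]
  have hBorel (s : Set X) : MeasurableSet[borel X] s :=
    let ⟨_, hF, hs⟩ := hFσ s
    measurableSet_borel_of_eq_iUnion_isClosed hF hs
  simpa only [isDiscrete_iff_forall_mem_exists_isOpen] using
    onePoint_not_countable_union_of_discrete_general hBorel
end
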